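/- arXiv:1509.02897 — 2 statements merged into one kernel-verified Lean document; each statement's English description precedes it below -/
import Mathlib

section
/- Let 0 < τ < 2 be fixed and set α = 1 − τ²/2 and β = √(τ² − τ⁴/4). For each dimension d, let A be a d×d random matrix with i.i.d. standard Gaussian entries, and define the cross-polytope hash h_A of a point x on the unit sphere S^{d−1} as the point of {±e_1, …, ±e_d} closest (in Euclidean distance) to Ax/‖Ax‖. Then for any p, q ∈ S^{d−1} with ‖p − q‖ = τ, one has ln(1 / Pr_A[h_A(p) = h_A(q)]) = (τ²/(4 − τ²))·ln d + O_τ(ln ln d); that is, there exist a constant C_τ > 0 and d₀ (depending only on τ) such that for all d ≥ d₀ and all such p, q, |ln(1 / Pr_A[h_A(p) = h_A(q)]) − (τ²/(4 − τ²))·ln d| ≤ C_τ · ln ln d. -/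
open MeasureTheory ProbabilityTheory Real

noncomputable section

/-- The standard Gaussian distribution `N(0,1)` on `ℝ`. -/
def stdGaussian : Measure ℝ := gaussianReal 0 1

/-- The distribution of a `d × d` random matrix with i.i.d. standard Gaussian entries. -/
def gaussMatrix (d : ℕ) : Measure (Fin d → Fin d → ℝ) :=
  Measure.pi fun _ => Measure.pi fun _ => stdGaussian

/-- The vertices `{±e_1, …, ±e_d}` of the cross-polytope in `ℝ^d`. -/
def crossPolytope (d : ℕ) : Set (EuclideanSpace ℝ (Fin d)) :=
  {y | ∃ i : Fin d, y = EuclideanSpace.single i (1 : ℝ) ∨ y = EuclideanSpace.single i (-1 : ℝ)}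

/-- Matrix-vector multiplication `A x`, viewed in Euclidean space. -/
def matVec {d : ℕ} (A : Fin d → Fin d → ℝ) (x : EuclideanSpace ℝ (Fin d)) :
    EuclideanSpace ℝ (Fin d) :=
  (WithLp.equiv 2 (Fin d → ℝ)).symm (fun i => ∑ j, A i j * x j)

/-- `h` is a cross-polytope hash family: for every matrix `A` and point `x`, the hash `h A x`
is a point of `{±e_1, …, ±e_d}` closest (in Euclidean distance) to `Ax / ‖Ax‖`
(ties, which occur with probability zero, are broken arbitrarily). -/
def IsCPHash {d : ℕ}
    (h : (Fin d → Fin d → ℝ) → EuclideanSpace ℝ (Fin d) → EuclideanSpace ℝ (Fin d)) : Prop :=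
  ∀ A x, h A x ∈ crossPolytope d ∧
    ∀ z ∈ crossPolytope d,
      dist (‖matVec A x‖⁻¹ • matVec A x) (h A x) ≤ dist (‖matVec A x‖⁻¹ • matVec A x) z

/-!
The coordinates of `A p` and `A q` are the inner products of `p` and `q` with independent standard
Gaussian vectors, the rows of `A`. The largest coordinate of `A p`, like that of `A q`, is about
`t = √(2 log d)`, so the two hashes agree essentially when a single row `z` satisfies `⟪p, z⟫ ≥ t`
and `⟪q, z⟫ ≥ t` up to signs. As `p + q` is orthogonal to `p - q`, this is hardly less likely than
`⟪p + q, z⟫ ≥ 2t`, where `⟪p + q, z⟫` has variance `‖p + q‖² = 4 - τ²`. Summing over the rows gives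
`d · exp (-2t² / (4 - τ²)) = d ^ (-τ² / (4 - τ²))`. Perturbing `t² = 2 log d` by a multiple of
`log log d` in the upper bound, and by a constant in the lower one, makes this rigorous and changes
the probability only by powers of `log d`.
-/

open scoped InnerProductSpace NNReal

section RealGaussian

variable {Ω : Type*} {mΩ : MeasurableSpace Ω} {μ : Measure Ω}

lemma measureReal_abs_ge_le_of_hasSubgaussianMGF [IsFiniteMeasure μ] {X : Ω → ℝ} {c : ℝ≥0}
    (h : HasSubgaussianMGF X c μ) {t : ℝ} (ht : 0 ≤ t) :
    μ.real {ω | t ≤ |X ω|} ≤ 2 * exp (-t ^ 2 / (2 * c)) :=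
  calc μ.real {ω | t ≤ |X ω|}
    _ = μ.real ({ω | t ≤ X ω} ∪ {ω | t ≤ (-X) ω}) := by
        congr 1 with ω
        exact le_abs (a := t) (b := X ω)
    _ ≤ μ.real {ω | t ≤ X ω} + μ.real {ω | t ≤ (-X) ω} := measureReal_union_le _ _
    _ ≤ 2 * exp (-t ^ 2 / (2 * c)) := by
        linarith [h.measure_ge_le ht, h.neg.measure_ge_le ht]

lemma hasSubgaussianMGF_of_hasLaw_gaussianReal {X : Ω → ℝ} {v : ℝ≥0}
    (h : HasLaw X (gaussianReal 0 v) μ) : HasSubgaussianMGF X v μ := by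
  refine .of_map (X := id) h.aemeasurable ?_
  rw [h.map_eq]
  exact ⟨integrable_exp_mul_gaussianReal, fun t ↦ by simp [mgf_id_gaussianReal]⟩

lemma gaussianPDFReal_zero_anti {v : ℝ≥0} {x y : ℝ} (hxy : |x| ≤ |y|) :
    gaussianPDFReal 0 v y ≤ gaussianPDFReal 0 v x := by
  rw [gaussianPDFReal, gaussianPDFReal, sub_zero, sub_zero]
  have := sq_le_sq.2 hxy
  gcongr

lemma gaussianPDFReal_zero_sq (σ : ℝ≥0) (x : ℝ) :
    gaussianPDFReal 0 (σ ^ 2) x = exp (-x ^ 2 / (2 * σ ^ 2)) / (√(2 * π) * σ) := by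
  rw [gaussianPDFReal, sub_zero, NNReal.coe_pow, sqrt_mul (by positivity), sqrt_sq σ.coe_nonneg,
    inv_mul_eq_div]

lemma mul_le_gaussianReal_sq_Icc {σ : ℝ≥0} (hσ : σ ≠ 0) {a b M : ℝ} (hab : a ≤ b)
    (ha : -M ≤ a) (hb : b ≤ M) :
    (b - a) * (exp (-M ^ 2 / (2 * σ ^ 2)) / (√(2 * π) * σ)) ≤
      (gaussianReal 0 (σ ^ 2)).real (Set.Icc a b) := by
  rw [← gaussianPDFReal_zero_sq, measureReal_def,
    gaussianReal_apply_eq_integral _ (pow_ne_zero 2 hσ),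
    ENNReal.toReal_ofReal (integral_nonneg fun x ↦ gaussianPDFReal_nonneg _ _ _)]
  calc (b - a) * gaussianPDFReal 0 (σ ^ 2) M
    _ = ∫ _ in Set.Icc a b, gaussianPDFReal 0 (σ ^ 2) M := by simp [hab]
    _ ≤ ∫ x in Set.Icc a b, gaussianPDFReal 0 (σ ^ 2) x := by
        refine setIntegral_mono_on (integrableOn_const (by simp))
          (integrable_gaussianPDFReal _ _).integrableOn measurableSet_Icc fun x hx ↦ ?_
        exact gaussianPDFReal_zero_anti
          ((abs_le.2 ⟨ha.trans hx.1, hx.2.trans hb⟩).trans (le_abs_self M))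

/- Over the interval `[t, t + 1/t]` a Gaussian density therefore stays within a constant factor of
its value at `t`. -/
lemma add_one_div_sq_le {t : ℝ} (ht : 1 ≤ t) : (t + 1 / t) ^ 2 ≤ t ^ 2 + 3 := by
  have hinv : (1 / t) ^ 2 ≤ 1 :=
    pow_le_one₀ (by positivity) ((div_le_one (one_pos.trans_le ht)).2 ht)
  have hexpand : (t + 1 / t) ^ 2 = t ^ 2 + 2 + (1 / t) ^ 2 := by
    field_simp
    ring
  linarith

lemma le_gaussianReal_abs_ge {t : ℝ} (ht : 1 ≤ t) :
    exp (-t ^ 2 / 2 - 3 / 2) / (√(2 * π) * t) ≤ (gaussianReal 0 1).real {z | t ≤ |z|} := by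
  have hsq := add_one_div_sq_le ht
  have hinv : 0 < 1 / t := one_div_pos.2 (one_pos.trans_le ht)
  have hIcc := mul_le_gaussianReal_sq_Icc one_ne_zero (a := t) (b := t + 1 / t) (by linarith)
    (by linarith) le_rfl
  simp only [add_sub_cancel_left, NNReal.coe_one, one_pow, mul_one] at hIcc
  calc exp (-t ^ 2 / 2 - 3 / 2) / (√(2 * π) * t)
    _ ≤ exp (-(t + 1 / t) ^ 2 / 2) / (√(2 * π) * t) := by
        gcongr
        linarith
    _ = 1 / t * (exp (-(t + 1 / t) ^ 2 / 2) / √(2 * π)) := by field_simp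
    _ ≤ (gaussianReal 0 1).real (Set.Icc t (t + 1 / t)) := hIcc
    _ ≤ (gaussianReal 0 1).real {z | t ≤ |z|} :=
        measureReal_mono fun z hz ↦ hz.1.trans (le_abs_self z)

lemma measureReal_pow_le_exp_neg_mul_compl [IsProbabilityMeasure μ] {s : Set Ω}
    (hs : MeasurableSet s) (n : ℕ) : μ.real s ^ n ≤ exp (-(n * μ.real sᶜ)) :=
  calc μ.real s ^ n
    _ ≤ exp (-μ.real sᶜ) ^ n := by
        refine pow_le_pow_left₀ measureReal_nonneg ?_ n
        linarith [probReal_add_probReal_compl (μ := μ) hs, add_one_le_exp (-μ.real sᶜ)]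
    _ = exp (-(n * μ.real sᶜ)) := by rw [← exp_nat_mul, mul_neg]

lemma gaussianReal_abs_lt_pow_le {t : ℝ} (ht : 1 ≤ t) (n : ℕ) :
    (gaussianReal 0 1).real {z | |z| < t} ^ n ≤
      exp (-(n * (exp (-t ^ 2 / 2 - 3 / 2) / (√(2 * π) * t)))) := by
  have hmeas : MeasurableSet {z : ℝ | |z| < t} := measurableSet_lt (by fun_prop) measurable_const
  have hcompl : {z : ℝ | |z| < t}ᶜ = {z | t ≤ |z|} := by ext z; simp
  refine (measureReal_pow_le_exp_neg_mul_compl hmeas n).trans ?_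
  rw [hcompl]
  gcongr
  exact le_gaussianReal_abs_ge ht

end RealGaussian

section StandardGaussian

variable {E : Type*} [NormedAddCommGroup E] [InnerProductSpace ℝ E] [FiniteDimensional ℝ E]
  [MeasurableSpace E] [BorelSpace E]

lemma hasLaw_inner_stdGaussian (x : E) :
    HasLaw (fun z ↦ ⟪x, z⟫_ℝ) (gaussianReal 0 (‖x‖₊ ^ 2)) (ProbabilityTheory.stdGaussian E) where
  aemeasurable := by fun_prop
  map_eq := by
    have hgauss : HasGaussianLaw (fun z ↦ ⟪x, z⟫_ℝ) (ProbabilityTheory.stdGaussian E) :=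
      IsGaussian.hasGaussianLaw_id.map_fun (innerSL ℝ x)
    have hmean : ∫ z, ⟪x, z⟫_ℝ ∂ProbabilityTheory.stdGaussian E = 0 :=
      integral_strongDual_stdGaussian (innerSL ℝ x)
    have hvar : Var[fun z ↦ ⟪x, z⟫_ℝ; ProbabilityTheory.stdGaussian E] = ‖x‖ ^ 2 := by
      simpa using variance_dual_stdGaussian (innerSL ℝ x)
    rw [hgauss.map_eq_gaussianReal, hmean, hvar]
    congr 1
    ext
    simp

lemma indepFun_inner_stdGaussian {x y : E} (h : ⟪x, y⟫_ℝ = 0) :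
    IndepFun (fun z ↦ ⟪x, z⟫_ℝ) (fun z ↦ ⟪y, z⟫_ℝ) (ProbabilityTheory.stdGaussian E) := by
  have hgauss : HasGaussianLaw (fun z ↦ (⟪x, z⟫_ℝ, ⟪y, z⟫_ℝ)) (ProbabilityTheory.stdGaussian E) :=
    IsGaussian.hasGaussianLaw_id.map_fun ((innerSL ℝ x).prod (innerSL ℝ y))
  refine hgauss.indepFun_of_covariance_eq_zero ?_
  rw [← covarianceBilin_apply_eq_cov IsGaussian.memLp_two_id, covarianceBilin_stdGaussian,
    innerSL_apply_apply, h]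

lemma stdGaussian_abs_inner_ge_le (x : E) {t : ℝ} (ht : 0 ≤ t) :
    (ProbabilityTheory.stdGaussian E).real {z | t ≤ |⟪x, z⟫_ℝ|} ≤
      2 * exp (-t ^ 2 / (2 * ‖x‖ ^ 2)) := by
  simpa using measureReal_abs_ge_le_of_hasSubgaussianMGF
    (hasSubgaussianMGF_of_hasLaw_gaussianReal (hasLaw_inner_stdGaussian x)) ht

lemma stdGaussian_abs_inner_lt {x : E} (hx : ‖x‖ = 1) (t : ℝ) :
    (ProbabilityTheory.stdGaussian E).real {z | |⟪x, z⟫_ℝ| < t} =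
      (gaussianReal 0 1).real {z | |z| < t} := by
  have hmeas : MeasurableSet {z : ℝ | |z| < t} := measurableSet_lt (by fun_prop) measurable_const
  have hx' : ‖x‖₊ = 1 := NNReal.eq hx
  rw [(hasLaw_inner_stdGaussian x).measureReal_eq hmeas, hx', one_pow]

lemma le_stdGaussian_abs_inner_lt_and {x y : E} (hx : ‖x‖ = 1) (hy : ‖y‖ = 1) {t : ℝ}
    (ht : 0 ≤ t) :
    1 - 4 * exp (-t ^ 2 / 2) ≤
      (ProbabilityTheory.stdGaussian E).real {z | |⟪x, z⟫_ℝ| < t ∧ |⟪y, z⟫_ℝ| < t} := by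
  have hcover : {z : E | |⟪x, z⟫_ℝ| < t ∧ |⟪y, z⟫_ℝ| < t} ∪
      ({z | t ≤ |⟪x, z⟫_ℝ|} ∪ {z | t ≤ |⟪y, z⟫_ℝ|}) = Set.univ := by
    ext z
    grind
  have htotal := measureReal_union_le (μ := ProbabilityTheory.stdGaussian E)
    {z | |⟪x, z⟫_ℝ| < t ∧ |⟪y, z⟫_ℝ| < t} ({z | t ≤ |⟪x, z⟫_ℝ|} ∪ {z | t ≤ |⟪y, z⟫_ℝ|})
  have htails := measureReal_union_le (μ := ProbabilityTheory.stdGaussian E)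
    {z | t ≤ |⟪x, z⟫_ℝ|} {z | t ≤ |⟪y, z⟫_ℝ|}
  have hx_tail := stdGaussian_abs_inner_ge_le x ht
  have hy_tail := stdGaussian_abs_inner_ge_le y ht
  rw [hcover, probReal_univ] at htotal
  rw [hx, one_pow, mul_one] at hx_tail
  rw [hy, one_pow, mul_one] at hy_tail
  linarith

lemma stdGaussian_inner_mem_and_inner_mem {x y : E} (h : ⟪x, y⟫_ℝ = 0) {s t : Set ℝ}
    (hs : MeasurableSet s) (ht : MeasurableSet t) :
    (ProbabilityTheory.stdGaussian E).real {z | ⟪x, z⟫_ℝ ∈ s ∧ ⟪y, z⟫_ℝ ∈ t} =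
      (gaussianReal 0 (‖x‖₊ ^ 2)).real s * (gaussianReal 0 (‖y‖₊ ^ 2)).real t := by
  rw [← (hasLaw_inner_stdGaussian x).map_eq, ← (hasLaw_inner_stdGaussian y).map_eq,
    map_measureReal_apply (by fun_prop) hs, map_measureReal_apply (by fun_prop) ht,
    measureReal_def, measureReal_def, measureReal_def, ← ENNReal.toReal_mul,
    ← (indepFun_inner_stdGaussian h).measure_inter_preimage_eq_mul _ _ hs ht]
  rfl

/- Since `x + y` and `x - y` are orthogonal, `⟪x + y, z⟫` and `⟪x - y, z⟫` are independent; the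
bound comes from the event that the first is slightly above `2t` and the second nearly `0`. -/
lemma le_stdGaussian_le_inner_and_le_inner {x y : E} (hxy : ‖x‖ = ‖y‖) (hadd : x + y ≠ 0)
    (hsub : x - y ≠ 0) {t w : ℝ} (ht : 0 ≤ t) (hw : 0 < w) :
    w ^ 2 / (π * ‖x + y‖ * ‖x - y‖) *
        exp (-(2 * (t + w) ^ 2 / ‖x + y‖ ^ 2 + w ^ 2 / (2 * ‖x - y‖ ^ 2))) ≤
      (ProbabilityTheory.stdGaussian E).real {z | t ≤ ⟪x, z⟫_ℝ ∧ t ≤ ⟪y, z⟫_ℝ} := by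
  have horth : ⟪x + y, x - y⟫_ℝ = 0 := (real_inner_add_sub_eq_zero_iff x y).2 hxy
  have hadd_bound := mul_le_gaussianReal_sq_Icc (nnnorm_ne_zero_iff.2 hadd)
    (a := 2 * t + w) (b := 2 * (t + w)) (by linarith) (by linarith) le_rfl
  have hsub_bound := mul_le_gaussianReal_sq_Icc (nnnorm_ne_zero_iff.2 hsub)
    (a := -w) (b := w) (by linarith) le_rfl le_rfl
  have hexp : -(2 * (t + w) ^ 2 / ‖x + y‖ ^ 2 + w ^ 2 / (2 * ‖x - y‖ ^ 2)) =
      -(2 * (t + w)) ^ 2 / (2 * ‖x + y‖ ^ 2) + -w ^ 2 / (2 * ‖x - y‖ ^ 2) := by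
    field_simp
    ring
  calc w ^ 2 / (π * ‖x + y‖ * ‖x - y‖) *
        exp (-(2 * (t + w) ^ 2 / ‖x + y‖ ^ 2 + w ^ 2 / (2 * ‖x - y‖ ^ 2)))
    _ = (2 * (t + w) - (2 * t + w)) *
            (exp (-(2 * (t + w)) ^ 2 / (2 * ‖x + y‖ ^ 2)) / (√(2 * π) * ‖x + y‖)) *
          ((w - -w) * (exp (-w ^ 2 / (2 * ‖x - y‖ ^ 2)) / (√(2 * π) * ‖x - y‖))) := by
        rw [hexp, exp_add]
        field_simp
        rw [sq_sqrt (by positivity)]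
        ring
    _ ≤ (gaussianReal 0 (‖x + y‖₊ ^ 2)).real (Set.Icc (2 * t + w) (2 * (t + w))) *
          (gaussianReal 0 (‖x - y‖₊ ^ 2)).real (Set.Icc (-w) w) := by
        refine mul_le_mul hadd_bound hsub_bound ?_ measureReal_nonneg
        exact mul_nonneg (by linarith) (by positivity)
    _ = (ProbabilityTheory.stdGaussian E).real {z | ⟪x + y, z⟫_ℝ ∈ Set.Icc (2 * t + w) (2 * (t + w))
          ∧ ⟪x - y, z⟫_ℝ ∈ Set.Icc (-w) w} :=
        (stdGaussian_inner_mem_and_inner_mem horth measurableSet_Icc measurableSet_Icc).symm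
    _ ≤ (ProbabilityTheory.stdGaussian E).real {z | t ≤ ⟪x, z⟫_ℝ ∧ t ≤ ⟪y, z⟫_ℝ} := by
        refine measureReal_mono fun z hz ↦ ?_
        simp only [Set.mem_ofPred_eq, Set.mem_Icc, inner_add_left, inner_sub_left] at hz
        constructor <;> linarith

lemma exp_mul_le_stdGaussian_le_inner_and_le_inner {x y : E} (hxy : ‖x‖ = ‖y‖) (hadd : x + y ≠ 0)
    (hsub : x - y ≠ 0) {t : ℝ} (ht : 1 ≤ t) :
    exp (-(6 / ‖x + y‖ ^ 2 + 1 / (2 * ‖x - y‖ ^ 2))) / (π * ‖x + y‖ * ‖x - y‖) *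
        (exp (-(2 * t ^ 2 / ‖x + y‖ ^ 2)) / t ^ 2) ≤
      (ProbabilityTheory.stdGaussian E).real {z | t ≤ ⟪x, z⟫_ℝ ∧ t ≤ ⟪y, z⟫_ℝ} := by
  have ht₀ : 0 < t := one_pos.trans_le ht
  have hinv : (1 / t) ^ 2 ≤ 1 := pow_le_one₀ (by positivity) ((div_le_one ht₀).2 ht)
  have hbound := le_stdGaussian_le_inner_and_le_inner hxy hadd hsub ht₀.le (one_div_pos.2 ht₀)
  refine le_trans ?_ hbound
  have hexp : -(6 / ‖x + y‖ ^ 2 + 1 / (2 * ‖x - y‖ ^ 2)) + -(2 * t ^ 2 / ‖x + y‖ ^ 2) =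
      -(2 * (t ^ 2 + 3) / ‖x + y‖ ^ 2 + 1 / (2 * ‖x - y‖ ^ 2)) := by ring
  calc exp (-(6 / ‖x + y‖ ^ 2 + 1 / (2 * ‖x - y‖ ^ 2))) / (π * ‖x + y‖ * ‖x - y‖) *
        (exp (-(2 * t ^ 2 / ‖x + y‖ ^ 2)) / t ^ 2)
    _ = (1 / t) ^ 2 / (π * ‖x + y‖ * ‖x - y‖) *
          exp (-(2 * (t ^ 2 + 3) / ‖x + y‖ ^ 2 + 1 / (2 * ‖x - y‖ ^ 2))) := by
        rw [← hexp, exp_add]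
        ring
    _ ≤ (1 / t) ^ 2 / (π * ‖x + y‖ * ‖x - y‖) *
          exp (-(2 * (t + 1 / t) ^ 2 / ‖x + y‖ ^ 2 + (1 / t) ^ 2 / (2 * ‖x - y‖ ^ 2))) := by
        gcongr
        exact add_one_div_sq_le ht

end StandardGaussian

section ProductMeasure

lemma setOf_mem_and_forall_ne_mem_eq_pi {ι Ω : Type*} [DecidableEq ι] (s t : Set Ω) (i : ι) :
    {f : ι → Ω | f i ∈ s ∧ ∀ j, j ≠ i → f j ∈ t} =
      Set.univ.pi (Function.update (fun _ ↦ t) i s) := by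
  ext f
  simp only [Set.mem_ofPred_eq, Set.mem_univ_pi]
  refine ⟨fun hf j ↦ ?_, fun hf ↦ ⟨by simpa using hf i, fun j hj ↦ by simpa [hj] using hf j⟩⟩
  rcases eq_or_ne j i with rfl | hj
  · simpa using hf.1
  · simpa [hj] using hf.2 j hj

variable {ι Ω : Type*} [Fintype ι] {mΩ : MeasurableSpace Ω} {μ : Measure Ω}

lemma measureReal_pi_forall_mem [SigmaFinite μ] (s : Set Ω) :
    (Measure.pi fun _ : ι ↦ μ).real {f | ∀ i, f i ∈ s} = μ.real s ^ Fintype.card ι := by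
  have hpi : {f : ι → Ω | ∀ i, f i ∈ s} = Set.univ.pi fun _ ↦ s := by ext; simp
  simp [hpi, measureReal_def]

lemma measureReal_pi_exists_mem_le [IsProbabilityMeasure μ] {s : Set Ω} (hs : MeasurableSet s) :
    (Measure.pi fun _ : ι ↦ μ).real {f | ∃ i, f i ∈ s} ≤ Fintype.card ι * μ.real s := by
  have hUnion : {f : ι → Ω | ∃ i, f i ∈ s} = ⋃ i, Function.eval i ⁻¹' s := by ext; simp
  calc (Measure.pi fun _ : ι ↦ μ).real {f | ∃ i, f i ∈ s}
    _ ≤ ∑ i, (Measure.pi fun _ : ι ↦ μ).real (Function.eval i ⁻¹' s) :=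
        hUnion ▸ measureReal_iUnion_fintype_le _
    _ = ∑ _ : ι, μ.real s := by
        refine Finset.sum_congr rfl fun i _ ↦ ?_
        exact (measurePreserving_eval (fun _ ↦ μ) i).measureReal_preimage hs.nullMeasurableSet
    _ = Fintype.card ι * μ.real s := by simp

lemma measureReal_pi_mem_and_forall_ne_mem [SigmaFinite μ] (s t : Set Ω) (i : ι) :
    (Measure.pi fun _ : ι ↦ μ).real {f | f i ∈ s ∧ ∀ j, j ≠ i → f j ∈ t} =
      μ.real s * μ.real t ^ (Fintype.card ι - 1) := by
  classical
  rw [setOf_mem_and_forall_ne_mem_eq_pi, measureReal_def, Measure.pi_pi, ENNReal.toReal_prod,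
    ← Finset.mul_prod_erase _ _ (Finset.mem_univ i), Function.update_self]
  have herase : ∀ j ∈ Finset.univ.erase i,
      (μ (Function.update (fun _ ↦ t) i s j)).toReal = μ.real t := fun j hj ↦ by
    rw [Function.update_of_ne (Finset.ne_of_mem_erase hj), measureReal_def]
  rw [Finset.prod_congr rfl herase, Finset.prod_const, Finset.card_erase_of_mem (Finset.mem_univ i),
    Finset.card_univ, measureReal_def μ s]

lemma measureReal_pi_exists_mem_and_forall_ne_mem [IsFiniteMeasure μ] {s t : Set Ω}
    (hs : MeasurableSet s) (ht : MeasurableSet t) (hst : Disjoint s t) :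
    (Measure.pi fun _ : ι ↦ μ).real {f | ∃ i, f i ∈ s ∧ ∀ j, j ≠ i → f j ∈ t} =
      Fintype.card ι * (μ.real s * μ.real t ^ (Fintype.card ι - 1)) := by
  classical
  have hUnion : {f : ι → Ω | ∃ i, f i ∈ s ∧ ∀ j, j ≠ i → f j ∈ t} =
      ⋃ i, {f | f i ∈ s ∧ ∀ j, j ≠ i → f j ∈ t} := by ext; simp
  have hdisj : Pairwise (Function.onFun Disjoint
      fun i ↦ {f : ι → Ω | f i ∈ s ∧ ∀ j, j ≠ i → f j ∈ t}) := fun i j hij ↦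
    Set.disjoint_left.2 fun f hi hj ↦ Set.disjoint_left.1 hst hi.1 (hj.2 i hij)
  have hmeas (i : ι) : MeasurableSet {f : ι → Ω | f i ∈ s ∧ ∀ j, j ≠ i → f j ∈ t} := by
    rw [setOf_mem_and_forall_ne_mem_eq_pi]
    refine .univ_pi fun j ↦ ?_
    rcases eq_or_ne j i with rfl | hj
    · simpa using hs
    · simpa [hj] using ht
  rw [hUnion, measureReal_iUnion_fintype hdisj hmeas]
  simp only [measureReal_pi_mem_and_forall_ne_mem, Finset.sum_const, Finset.card_univ,
    nsmul_eq_mul]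

end ProductMeasure

section GaussianMatrix

variable {d : ℕ}

/-- The rows of a matrix, as vectors of Euclidean space, so that the coordinates of `A x` are inner
products of `x` with the rows. -/
def rows (d : ℕ) : (Fin d → Fin d → ℝ) ≃ᵐ (Fin d → EuclideanSpace ℝ (Fin d)) :=
  .piCongrRight fun _ ↦ .toLp 2 (Fin d → ℝ)

lemma matVec_apply (A : Fin d → Fin d → ℝ) (x : EuclideanSpace ℝ (Fin d)) (i : Fin d) :
    matVec A x i = ⟪x, rows d A i⟫_ℝ := rfl

lemma measurePreserving_rows (d : ℕ) :
    MeasurePreserving (rows d) (gaussMatrix d)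
      (Measure.pi fun _ ↦ ProbabilityTheory.stdGaussian (EuclideanSpace ℝ (Fin d))) :=
  have hrow : MeasurePreserving (MeasurableEquiv.toLp 2 (Fin d → ℝ))
      (Measure.pi fun _ ↦ gaussianReal 0 1)
      (ProbabilityTheory.stdGaussian (EuclideanSpace ℝ (Fin d))) :=
    ⟨MeasurableEquiv.measurable _, map_pi_eq_stdGaussian⟩
  measurePreserving_pi _ _ fun _ ↦ hrow

lemma measureReal_gaussMatrix_rows_mem (s : Set (Fin d → EuclideanSpace ℝ (Fin d))) :
    (gaussMatrix d).real {A | rows d A ∈ s} =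
      (Measure.pi fun _ ↦ ProbabilityTheory.stdGaussian (EuclideanSpace ℝ (Fin d))).real s := by
  rw [measureReal_def, measureReal_def]
  exact congrArg ENNReal.toReal ((measurePreserving_rows d).measure_preimage_equiv s)

end GaussianMatrix

section Hash

variable {d : ℕ}
  {h : (Fin d → Fin d → ℝ) → EuclideanSpace ℝ (Fin d) → EuclideanSpace ℝ (Fin d)}

lemma inner_le_inner_of_dist_le {E : Type*} [NormedAddCommGroup E] [InnerProductSpace ℝ E]
    {u v w : E} (hvw : ‖v‖ = ‖w‖) (hdist : dist u v ≤ dist u w) : ⟪w, u⟫_ℝ ≤ ⟪v, u⟫_ℝ := by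
  have hsq := pow_le_pow_left₀ dist_nonneg hdist 2
  rw [dist_eq_norm, dist_eq_norm, norm_sub_sq_real, norm_sub_sq_real, hvw] at hsq
  rw [real_inner_comm, real_inner_comm u v]
  linarith

lemma norm_add_sq_eq_four_sub_dist_sq {E : Type*} [NormedAddCommGroup E] [InnerProductSpace ℝ E]
    {x y : E} (hx : ‖x‖ = 1) (hy : ‖y‖ = 1) : ‖x + y‖ ^ 2 = 4 - dist x y ^ 2 := by
  have := parallelogram_law_with_norm ℝ x y
  rw [hx, hy] at this
  rw [dist_eq_norm]
  linarith

lemma norm_of_mem_crossPolytope {v : EuclideanSpace ℝ (Fin d)} (hv : v ∈ crossPolytope d) :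
    ‖v‖ = 1 := by
  rcases hv with ⟨i, rfl | rfl⟩ <;> simp

lemma exists_inner_le_abs_of_mem_crossPolytope {v : EuclideanSpace ℝ (Fin d)}
    (hv : v ∈ crossPolytope d) : ∃ i, ∀ y : EuclideanSpace ℝ (Fin d), ⟪v, y⟫_ℝ ≤ |y i| := by
  rcases hv with ⟨i, rfl | rfl⟩
  · exact ⟨i, fun y ↦ by simpa [EuclideanSpace.inner_single_left] using le_abs_self (y i)⟩
  · exact ⟨i, fun y ↦ by simpa [EuclideanSpace.inner_single_left] using neg_le_abs (y i)⟩

lemma exists_mem_crossPolytope_inner_eq_abs (y : EuclideanSpace ℝ (Fin d)) (i : Fin d) :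
    ∃ v ∈ crossPolytope d, ⟪v, y⟫_ℝ = |y i| := by
  rcases abs_choice (y i) with hi | hi
  · exact ⟨_, ⟨i, .inl rfl⟩, by simp [EuclideanSpace.inner_single_left, hi]⟩
  · exact ⟨_, ⟨i, .inr rfl⟩, by simp [EuclideanSpace.inner_single_left, hi]⟩

lemma IsCPHash.inner_le_inner (hh : IsCPHash h) (A : Fin d → Fin d → ℝ)
    (x : EuclideanSpace ℝ (Fin d)) {v : EuclideanSpace ℝ (Fin d)} (hv : v ∈ crossPolytope d) :
    ⟪v, matVec A x⟫_ℝ ≤ ⟪h A x, matVec A x⟫_ℝ := by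
  obtain ⟨hmem, hclosest⟩ := hh A x
  rcases eq_or_ne (matVec A x) 0 with h0 | h0
  · simp [h0]
  · have hnorm : ‖h A x‖ = ‖v‖ := by
      rw [norm_of_mem_crossPolytope hmem, norm_of_mem_crossPolytope hv]
    have hscaled := inner_le_inner_of_dist_le hnorm (hclosest v hv)
    rw [real_inner_smul_right, real_inner_smul_right] at hscaled
    exact le_of_mul_le_mul_left hscaled (by positivity)

lemma IsCPHash.abs_matVec_le_inner (hh : IsCPHash h) (A : Fin d → Fin d → ℝ)
    (x : EuclideanSpace ℝ (Fin d)) (i : Fin d) : |matVec A x i| ≤ ⟪h A x, matVec A x⟫_ℝ := by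
  obtain ⟨v, hv, hvi⟩ := exists_mem_crossPolytope_inner_eq_abs (matVec A x) i
  exact hvi ▸ hh.inner_le_inner A x hv

lemma IsCPHash.eq_single (hh : IsCPHash h) {A : Fin d → Fin d → ℝ}
    {x : EuclideanSpace ℝ (Fin d)} {i : Fin d} {t : ℝ} (ht : 0 < t) (hi : t ≤ matVec A x i)
    (hne : ∀ j, j ≠ i → |matVec A x j| < t) : h A x = EuclideanSpace.single i 1 := by
  have hmax := hh.abs_matVec_le_inner A x i
  have hpos := (ht.trans_le hi).trans_le ((le_abs_self _).trans hmax)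
  obtain ⟨k, hk⟩ := (hh A x).1
  obtain rfl : k = i := by
    by_contra hki
    have hlt := abs_lt.1 (hne k hki)
    have hge := hi.trans ((le_abs_self _).trans hmax)
    rcases hk with hk | hk <;>
      simp only [hk, EuclideanSpace.inner_single_left, map_neg, map_one, neg_mul, one_mul]
        at hge <;>
      linarith
  refine hk.resolve_right fun hk ↦ ?_
  rw [hk, EuclideanSpace.inner_single_left, map_neg, map_one, neg_mul, one_mul] at hpos
  linarith

lemma IsCPHash.collision_imp (hh : IsCPHash h) {A : Fin d → Fin d → ℝ}
    {p q : EuclideanSpace ℝ (Fin d)} (hpq : h A p = h A q) (t : ℝ) :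
    (∀ i, |matVec A p i| < t) ∨ (∀ i, |matVec A q i| < t) ∨
      ∃ i, 2 * t ≤ |matVec A p i + matVec A q i| := by
  by_contra! hcon
  obtain ⟨⟨j, hj⟩, ⟨k, hk⟩, hsum⟩ := hcon
  obtain ⟨i, hi⟩ := exists_inner_le_abs_of_mem_crossPolytope (hh A p).1
  have hp := hj.trans (hh.abs_matVec_le_inner A p j)
  have hq := hk.trans (hh.abs_matVec_le_inner A q k)
  have hinner := hi (matVec A p + matVec A q)
  rw [inner_add_right, PiLp.add_apply] at hinner
  rw [← hpq] at hq
  linarith [hsum i]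

/-- The probability that the hash `h` of a random Gaussian matrix takes the same value at `p` and
`q`. -/
def collisionProb (h : (Fin d → Fin d → ℝ) → EuclideanSpace ℝ (Fin d) → EuclideanSpace ℝ (Fin d))
    (p q : EuclideanSpace ℝ (Fin d)) : ℝ :=
  (gaussMatrix d).real {A | h A p = h A q}

instance isProbabilityMeasure_gaussMatrix (d : ℕ) : IsProbabilityMeasure (gaussMatrix d) :=
  inferInstanceAs (IsProbabilityMeasure (Measure.pi fun _ ↦ Measure.pi fun _ ↦ gaussianReal 0 1))

lemma gaussMatrix_forall_abs_matVec_lt {x : EuclideanSpace ℝ (Fin d)} (hx : ‖x‖ = 1) (t : ℝ) :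
    (gaussMatrix d).real {A | ∀ i, |matVec A x i| < t} =
      (gaussianReal 0 1).real {z | |z| < t} ^ d := by
  have hpi := measureReal_pi_forall_mem (ι := Fin d)
    (μ := ProbabilityTheory.stdGaussian (EuclideanSpace ℝ (Fin d))) {z | |⟪x, z⟫_ℝ| < t}
  rw [stdGaussian_abs_inner_lt hx, Fintype.card_fin] at hpi
  simp only [matVec_apply]
  exact (measureReal_gaussMatrix_rows_mem {f | ∀ i, |⟪x, f i⟫_ℝ| < t}).trans hpi

lemma gaussMatrix_exists_le_abs_matVec_add_le (p q : EuclideanSpace ℝ (Fin d)) {t : ℝ}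
    (ht : 0 ≤ t) :
    (gaussMatrix d).real {A | ∃ i, t ≤ |matVec A p i + matVec A q i|} ≤
      d * (2 * exp (-t ^ 2 / (2 * ‖p + q‖ ^ 2))) := by
  have hmeas : MeasurableSet {z | t ≤ |⟪p + q, z⟫_ℝ|} :=
    measurableSet_le measurable_const (by fun_prop)
  have hpi := measureReal_pi_exists_mem_le (ι := Fin d)
    (μ := ProbabilityTheory.stdGaussian (EuclideanSpace ℝ (Fin d))) hmeas
  simp only [Set.mem_ofPred_eq, inner_add_left, Fintype.card_fin] at hpi
  calc (gaussMatrix d).real {A | ∃ i, t ≤ |matVec A p i + matVec A q i|}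
    _ ≤ d * (ProbabilityTheory.stdGaussian _).real {z | t ≤ |⟪p + q, z⟫_ℝ|} := by
        simp only [inner_add_left, matVec_apply]
        exact (measureReal_gaussMatrix_rows_mem
          {f | ∃ i, t ≤ |⟪p, f i⟫_ℝ + ⟪q, f i⟫_ℝ|}).trans_le hpi
    _ ≤ d * (2 * exp (-t ^ 2 / (2 * ‖p + q‖ ^ 2))) := by
        gcongr
        exact stdGaussian_abs_inner_ge_le _ ht

lemma IsCPHash.collisionProb_le (hh : IsCPHash h) {p q : EuclideanSpace ℝ (Fin d)}
    (hp : ‖p‖ = 1) (hq : ‖q‖ = 1) {t : ℝ} (ht : 0 ≤ t) :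
    collisionProb h p q ≤ 2 * (gaussianReal 0 1).real {z | |z| < t} ^ d +
      2 * d * exp (-(2 * t ^ 2 / ‖p + q‖ ^ 2)) := by
  have hsum := gaussMatrix_exists_le_abs_matVec_add_le p q (t := 2 * t) (by linarith)
  have hexp : -(2 * t) ^ 2 / (2 * ‖p + q‖ ^ 2) = -(2 * t ^ 2 / ‖p + q‖ ^ 2) := by
    rw [← neg_div, mul_pow, ← mul_div_mul_left (-(2 * t ^ 2)) _ two_ne_zero]
    ring
  rw [hexp] at hsum
  calc collisionProb h p q
    _ ≤ (gaussMatrix d).real ({A | ∀ i, |matVec A p i| < t} ∪ ({A | ∀ i, |matVec A q i| < t} ∪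
          {A | ∃ i, 2 * t ≤ |matVec A p i + matVec A q i|})) :=
        measureReal_mono fun A hA ↦ hh.collision_imp hA t
    _ ≤ (gaussMatrix d).real {A | ∀ i, |matVec A p i| < t} +
          ((gaussMatrix d).real {A | ∀ i, |matVec A q i| < t} +
          (gaussMatrix d).real {A | ∃ i, 2 * t ≤ |matVec A p i + matVec A q i|}) :=
        (measureReal_union_le _ _).trans (by gcongr; exact measureReal_union_le _ _)
    _ ≤ 2 * (gaussianReal 0 1).real {z | |z| < t} ^ d +
          2 * d * exp (-(2 * t ^ 2 / ‖p + q‖ ^ 2)) := by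
        rw [gaussMatrix_forall_abs_matVec_lt hp, gaussMatrix_forall_abs_matVec_lt hq]
        linarith

lemma IsCPHash.le_collisionProb (hh : IsCPHash h) (p q : EuclideanSpace ℝ (Fin d)) {t : ℝ}
    (ht : 0 < t) :
    d * ((ProbabilityTheory.stdGaussian _).real {z | t ≤ ⟪p, z⟫_ℝ ∧ t ≤ ⟪q, z⟫_ℝ} *
      (ProbabilityTheory.stdGaussian _).real {z | |⟪p, z⟫_ℝ| < t ∧ |⟪q, z⟫_ℝ| < t} ^ (d - 1)) ≤
      collisionProb h p q := by
  have hmeas (x : EuclideanSpace ℝ (Fin d)) : Measurable fun z ↦ ⟪x, z⟫_ℝ := by fun_prop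
  have hlarge : MeasurableSet {z | t ≤ ⟪p, z⟫_ℝ ∧ t ≤ ⟪q, z⟫_ℝ} :=
    (measurableSet_le measurable_const (hmeas p)).inter
      (measurableSet_le measurable_const (hmeas q))
  have hsmall : MeasurableSet {z | |⟪p, z⟫_ℝ| < t ∧ |⟪q, z⟫_ℝ| < t} :=
    (measurableSet_lt (hmeas p).abs measurable_const).inter
      (measurableSet_lt (hmeas q).abs measurable_const)
  have hdisj : Disjoint {z | t ≤ ⟪p, z⟫_ℝ ∧ t ≤ ⟪q, z⟫_ℝ}
      {z | |⟪p, z⟫_ℝ| < t ∧ |⟪q, z⟫_ℝ| < t} :=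
    Set.disjoint_left.2 fun z hz hz' ↦ ((le_abs_self _).trans_lt hz'.1).not_ge hz.1
  have hpi := measureReal_pi_exists_mem_and_forall_ne_mem (ι := Fin d)
    (μ := ProbabilityTheory.stdGaussian _) hlarge hsmall hdisj
  rw [Fintype.card_fin] at hpi
  rw [← hpi, ← measureReal_gaussMatrix_rows_mem]
  simp only [Set.mem_ofPred_eq, ← matVec_apply]
  refine measureReal_mono fun A ⟨i, hi, hne⟩ ↦ ?_
  exact (hh.eq_single ht hi.1 fun j hj ↦ (hne j hj).1).trans
    (hh.eq_single ht hi.2 fun j hj ↦ (hne j hj).2).symm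

end Hash

section Asymptotics

lemma mul_exp_neg_two_mul_sub_log_log_div {x : ℝ} (hx : 1 < x) (s : ℝ) :
    x * exp (-(2 * (2 * log x - 6 * log (log x)) / s)) = x ^ (1 - 4 / s) * log x ^ (12 / s) := by
  have hexp : -(2 * (2 * log x - 6 * log (log x)) / s) =
      log x * -(4 / s) + log (log x) * (12 / s) := by ring
  rw [hexp, exp_add, ← rpow_def_of_pos (one_pos.trans hx), ← rpow_def_of_pos (log_pos hx),
    sub_eq_add_neg, rpow_add (one_pos.trans hx),
    rpow_one, mul_assoc]

/- For `t² = 2 log x - 6 log log x` the expected number of coordinates of absolute value at least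
`t` among `x` is of order `(log x) ^ (5 / 2)`, which beats every multiple of `log x`. -/
lemma mul_log_le_mul_exp_div_of_sq_eq {x r : ℝ} (hx : 0 < x) (hlog : 1 ≤ log x)
    (hr : 2 * r ≤ log x * (exp (-(3 / 2)) / √(2 * π)))
    {t : ℝ} (ht : 1 ≤ t) (htsq : t ^ 2 = 2 * log x - 6 * log (log x)) :
    r * log x ≤ x * (exp (-t ^ 2 / 2 - 3 / 2) / (√(2 * π) * t)) := by
  have : 0 < t := one_pos.trans_le ht
  have ht_le : t ≤ 2 * log x := by
    refine abs_le_of_sq_le_sq' ?_ (by linarith) |>.2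
    nlinarith [log_nonneg hlog]
  have hexp : x * exp (-t ^ 2 / 2 - 3 / 2) = log x ^ 3 * exp (-(3 / 2)) := by
    have hsplit : -t ^ 2 / 2 - 3 / 2 = -log x + ((3 : ℕ) * log (log x) + -(3 / 2)) := by
      rw [htsq]
      push_cast
      ring
    rw [hsplit, exp_add, exp_neg, exp_log hx, exp_add, exp_nat_mul, exp_log (one_pos.trans_le hlog)]
    field_simp
  calc r * log x
    _ ≤ log x * (exp (-(3 / 2)) / √(2 * π)) / 2 * log x := by gcongr; linarith
    _ = log x ^ 3 * exp (-(3 / 2)) / (√(2 * π) * (2 * log x)) := by field_simp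
    _ ≤ log x ^ 3 * exp (-(3 / 2)) / (√(2 * π) * t) := by gcongr
    _ = x * (exp (-t ^ 2 / 2 - 3 / 2) / (√(2 * π) * t)) := by rw [← hexp, mul_div_assoc]

lemma eventually_one_le_log_and_six_mul_log_log_le :
    ∀ᶠ n : ℕ in Filter.atTop, 1 ≤ log n ∧ 6 * log (log n) ≤ log n := by
  have hlog_tendsto : Filter.Tendsto (fun n : ℕ ↦ log n) Filter.atTop Filter.atTop :=
    tendsto_log_atTop.comp tendsto_natCast_atTop_atTop
  have hloglog := isLittleO_log_id_atTop.bound (show (0 : ℝ) < 1 / 6 by norm_num)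
  filter_upwards [hlog_tendsto.eventually_ge_atTop 1, hlog_tendsto.eventually hloglog]
    with n hlog hloglog
  rw [id, norm_of_nonneg (log_nonneg hlog), norm_of_nonneg (zero_le_one.trans hlog)] at hloglog
  exact ⟨hlog, by linarith⟩

lemma eventually_gaussianReal_abs_lt_pow_le_rpow (r : ℝ) :
    ∀ᶠ n : ℕ in Filter.atTop,
      (gaussianReal 0 1).real {z | |z| < √(2 * log n - 6 * log (log n))} ^ n ≤ (n : ℝ) ^ (-r) := by
  have hc : 0 < exp (-(3 / 2)) / √(2 * π) := by positivity
  have hlog_mul_tendsto : Filter.Tendsto (fun n : ℕ ↦ log n * (exp (-(3 / 2)) / √(2 * π)))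
      Filter.atTop Filter.atTop :=
    (tendsto_log_atTop.comp tendsto_natCast_atTop_atTop).atTop_mul_const hc
  filter_upwards [eventually_one_le_log_and_six_mul_log_log_le,
    hlog_mul_tendsto.eventually_ge_atTop (2 * r)] with n ⟨hlog, hloglog⟩ hr
  have hn : 0 < (n : ℝ) :=
    one_pos.trans ((log_pos_iff n.cast_nonneg).1 (one_pos.trans_le hlog))
  have htsq : √(2 * log n - 6 * log (log n)) ^ 2 = 2 * log n - 6 * log (log n) :=
    sq_sqrt (by linarith)
  have ht : 1 ≤ √(2 * log n - 6 * log (log n)) := one_le_sqrt.2 (by linarith)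
  calc (gaussianReal 0 1).real {z | |z| < √(2 * log n - 6 * log (log n))} ^ n
    _ ≤ _ := gaussianReal_abs_lt_pow_le ht n
    _ ≤ exp (-(r * log n)) :=
        exp_le_exp.2 (neg_le_neg (mul_log_le_mul_exp_div_of_sq_eq hn hlog hr ht htsq))
    _ = (n : ℝ) ^ (-r) := by
        rw [rpow_def_of_pos hn, mul_neg, mul_comm r]

lemma eventually_collisionProb_le (s : ℝ) :
    ∀ᶠ d : ℕ in Filter.atTop,
      ∀ h : (Fin d → Fin d → ℝ) → EuclideanSpace ℝ (Fin d) → EuclideanSpace ℝ (Fin d),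
        IsCPHash h → ∀ p q, ‖p‖ = 1 → ‖q‖ = 1 → ‖p + q‖ ^ 2 = s →
          collisionProb h p q ≤ 4 * ((d : ℝ) ^ (1 - 4 / s) * log d ^ (12 / s)) := by
  filter_upwards [eventually_gaussianReal_abs_lt_pow_le_rpow (4 / s - 1),
    eventually_one_le_log_and_six_mul_log_log_le] with d hsmall ⟨hlog, hloglog⟩ h hh p q hp hq hs
  have hd : 1 < (d : ℝ) := (log_pos_iff d.cast_nonneg).1 (one_pos.trans_le hlog)
  have hs₀ : 0 ≤ s := hs ▸ sq_nonneg _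
  have hone : 1 ≤ log d ^ (12 / s) := one_le_rpow hlog (by positivity)
  rw [neg_sub] at hsmall
  calc collisionProb h p q
    _ ≤ 2 * (gaussianReal 0 1).real {z | |z| < √(2 * log d - 6 * log (log d))} ^ d +
          2 * (d * exp (-(2 * (2 * log d - 6 * log (log d)) / s))) := by
        have := hh.collisionProb_le hp hq (sqrt_nonneg (2 * log d - 6 * log (log d)))
        rwa [sq_sqrt (by linarith), hs, mul_assoc 2 (d : ℝ)] at this
    _ ≤ 2 * ((d : ℝ) ^ (1 - 4 / s) * log d ^ (12 / s)) +
          2 * ((d : ℝ) ^ (1 - 4 / s) * log d ^ (12 / s)) := by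
        rw [mul_exp_neg_two_mul_sub_log_log_div hd]
        gcongr
        exact hsmall.trans (le_mul_of_one_le_right (by positivity) hone)
    _ = 4 * ((d : ℝ) ^ (1 - 4 / s) * log d ^ (12 / s)) := by ring

lemma half_le_stdGaussian_abs_inner_lt_and_pow {E : Type*} [NormedAddCommGroup E]
    [InnerProductSpace ℝ E] [FiniteDimensional ℝ E] [MeasurableSpace E] [BorelSpace E] {x y : E}
    (hx : ‖x‖ = 1) (hy : ‖y‖ = 1) {n : ℕ} (hn : 1 ≤ n) :
    1 / 2 ≤ (ProbabilityTheory.stdGaussian E).real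
      {z | |⟪x, z⟫_ℝ| < √(2 * log (8 * n)) ∧ |⟪y, z⟫_ℝ| < √(2 * log (8 * n))} ^ (n - 1) := by
  have hn' : (1 : ℝ) ≤ n := by exact_mod_cast hn
  have hslab := le_stdGaussian_abs_inner_lt_and hx hy (sqrt_nonneg (2 * log (8 * n)))
  have hexp : 4 * exp (-√(2 * log (8 * n)) ^ 2 / 2) = 1 / (2 * n) := by
    have hlog : 0 ≤ log (8 * n) := log_nonneg (by linarith)
    rw [sq_sqrt (by positivity), ← mul_neg, mul_div_cancel_left₀ _ two_ne_zero, exp_neg,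
      exp_log (by positivity)]
    field_simp
    norm_num
  rw [hexp] at hslab
  have hsmall : 1 / (2 * (n : ℝ)) ≤ 1 := (div_le_one (by positivity)).2 (by linarith)
  calc (1 / 2 : ℝ)
    _ ≤ 1 + ((n - 1 : ℕ) : ℝ) * (-(1 / (2 * n))) := by
        rw [Nat.cast_sub hn]
        field_simp
        linarith
    _ ≤ (1 + -(1 / (2 * n))) ^ (n - 1) := one_add_mul_le_pow (by linarith) _
    _ ≤ _ := pow_le_pow_left₀ (by linarith) (by linarith) _

lemma log_eight_mul_le {x : ℝ} (hx : 2 ≤ x) : log (8 * x) ≤ 4 * log x := by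
  have hpow : 8 * x ≤ x ^ 4 := by
    have : 2 ^ 3 ≤ x ^ 3 := pow_le_pow_left₀ zero_le_two hx 3
    nlinarith
  simpa using log_le_log (by linarith) hpow

lemma le_mul_exp_neg_two_mul_log_eight_div {x : ℝ} (hx : 2 ≤ x) (s : ℝ) :
    (8 : ℝ) ^ (-(4 / s)) / 8 * (x ^ (1 - 4 / s) * (log x)⁻¹) ≤
      x * (exp (-(2 * (2 * log (8 * x)) / s)) / (2 * log (8 * x))) := by
  have hx₀ : 0 < x := by linarith
  have hlog : 0 < log (8 * x) := log_pos (by linarith)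
  have hexp : x * exp (-(2 * (2 * log (8 * x)) / s)) = 8 ^ (-(4 / s)) * x ^ (1 - 4 / s) := by
    have hsplit : -(2 * (2 * log (8 * x)) / s) = log (8 * x) * -(4 / s) := by ring
    rw [hsplit, ← rpow_def_of_pos (by positivity), mul_rpow (by norm_num) hx₀.le, sub_eq_add_neg,
      rpow_add hx₀, rpow_one]
    ring
  calc (8 : ℝ) ^ (-(4 / s)) / 8 * (x ^ (1 - 4 / s) * (log x)⁻¹)
    _ = 8 ^ (-(4 / s)) * x ^ (1 - 4 / s) / (2 * (4 * log x)) := by ring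
    _ ≤ 8 ^ (-(4 / s)) * x ^ (1 - 4 / s) / (2 * log (8 * x)) := by
        gcongr
        exact log_eight_mul_le hx
    _ = x * (exp (-(2 * (2 * log (8 * x)) / s)) / (2 * log (8 * x))) := by
        rw [← hexp, mul_div_assoc]

lemma exists_pos_mul_le_collisionProb {s r : ℝ} (hs : 0 < s) (hr : 0 < r) :
    ∃ K > 0, ∀ d : ℕ, 2 ≤ d →
      ∀ h : (Fin d → Fin d → ℝ) → EuclideanSpace ℝ (Fin d) → EuclideanSpace ℝ (Fin d),
        IsCPHash h → ∀ p q, ‖p‖ = 1 → ‖q‖ = 1 → ‖p + q‖ ^ 2 = s → dist p q = r →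
          K * ((d : ℝ) ^ (1 - 4 / s) * (log d)⁻¹) ≤ collisionProb h p q := by
  set c := exp (-(6 / s + 1 / (2 * r ^ 2))) / (π * √s * r)
  refine ⟨c / 2 * (8 ^ (-(4 / s)) / 8), by positivity, fun d hd h hh p q hp hq hadd_sq hsub ↦ ?_⟩
  have hadd : ‖p + q‖ = √s := by rw [← hadd_sq, sqrt_sq (norm_nonneg _)]
  rw [dist_eq_norm] at hsub
  have hd' : (2 : ℝ) ≤ d := by exact_mod_cast hd
  have hlog : 1 / 2 ≤ log (8 * d) := by
    rw [le_log_iff_exp_le (by linarith)]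
    linarith [exp_one_lt_d9, exp_le_exp.2 (show (1 / 2 : ℝ) ≤ 1 by norm_num)]
  have ht : 1 ≤ √(2 * log (8 * d)) := one_le_sqrt.2 (by linarith)
  have hlarge := exp_mul_le_stdGaussian_le_inner_and_le_inner (hp.trans hq.symm)
    (norm_ne_zero_iff.1 (hadd ▸ (sqrt_pos.2 hs).ne')) (norm_ne_zero_iff.1 (hsub ▸ hr.ne')) ht
  have hsmall := half_le_stdGaussian_abs_inner_lt_and_pow hp hq (one_le_two.trans hd)
  rw [hadd, hsub, sq_sqrt hs.le, sq_sqrt (by linarith)] at hlarge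
  calc c / 2 * (8 ^ (-(4 / s)) / 8) * ((d : ℝ) ^ (1 - 4 / s) * (log d)⁻¹)
    _ = c / 2 * (8 ^ (-(4 / s)) / 8 * ((d : ℝ) ^ (1 - 4 / s) * (log d)⁻¹)) := by ring
    _ ≤ c / 2 * (d * (exp (-(2 * (2 * log (8 * d)) / s)) / (2 * log (8 * d)))) :=
        mul_le_mul_of_nonneg_left (le_mul_exp_neg_two_mul_log_eight_div hd' _) (by positivity)
    _ = d * (c * (exp (-(2 * (2 * log (8 * d)) / s)) / (2 * log (8 * d))) * (1 / 2)) := by ring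
    _ ≤ d * ((ProbabilityTheory.stdGaussian _).real
            {z | √(2 * log (8 * d)) ≤ ⟪p, z⟫_ℝ ∧ √(2 * log (8 * d)) ≤ ⟪q, z⟫_ℝ} *
          (ProbabilityTheory.stdGaussian _).real {z | |⟪p, z⟫_ℝ| < √(2 * log (8 * d)) ∧
            |⟪q, z⟫_ℝ| < √(2 * log (8 * d))} ^ (d - 1)) := by gcongr
    _ ≤ collisionProb h p q := hh.le_collisionProb p q (one_pos.trans_le ht)

lemma abs_log_one_div_sub_le {K K' P x y r a b : ℝ} (hK : 0 < K) (hK' : 0 < K') (hx : 0 < x)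
    (hy : 0 < y) (hlog : 1 ≤ log y) (hlower : K * (x ^ (-r) * y ^ (-a)) ≤ P)
    (hupper : P ≤ K' * (x ^ (-r) * y ^ b)) :
    |log (1 / P) - r * log x| ≤ (|log K| + |log K'| + |a| + |b|) * log y := by
  have hxr := rpow_pos_of_pos hx (-r)
  have hpow (c : ℝ) := rpow_pos_of_pos hy c
  have hlog_bound {C : ℝ} (hC : 0 < C) (c : ℝ) :
      log (C * (x ^ (-r) * y ^ c)) = log C - r * log x + c * log y := by
    rw [log_mul hC.ne' (mul_pos hxr (hpow c)).ne', log_mul hxr.ne' (hpow c).ne', log_rpow hx,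
      log_rpow hy]
    ring
  have hbot : 0 < K * (x ^ (-r) * y ^ (-a)) := mul_pos hK (mul_pos hxr (hpow _))
  have hlower_log := log_le_log hbot hlower
  have hupper_log := log_le_log (hbot.trans_le hlower) hupper
  rw [hlog_bound hK] at hlower_log
  rw [hlog_bound hK'] at hupper_log
  have hconst (c : ℝ) : |c| ≤ |c| * log y := le_mul_of_one_le_right (abs_nonneg c) hlog
  have hcoeff (c : ℝ) : c * log y ≤ |c| * log y := by gcongr; exact le_abs_self c
  have hnonneg (c : ℝ) : 0 ≤ |c| * log y := (abs_nonneg c).trans (hconst c)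
  rw [one_div, log_inv, abs_le]
  constructor
  · linarith [le_abs_self (log K'), hconst (log K'), hcoeff b, hnonneg (log K), hnonneg a]
  · linarith [neg_abs_le (log K), hconst (log K), hcoeff a, hnonneg (log K'), hnonneg b]

end Asymptotics

/-- For `0 < τ < 2`, the collision probability of the cross-polytope hash of two unit vectors
at distance `τ` satisfies
`ln (1 / Pr[h_A(p) = h_A(q)]) = (τ²/(4 - τ²))·ln d + O_τ(ln ln d)`. -/
theorem cross_polytope_collision_probability (τ : ℝ) (hτ0 : 0 < τ) (hτ2 : τ < 2) :
    ∃ C : ℝ, 0 < C ∧ ∃ d₀ : ℕ, ∀ d : ℕ, d₀ ≤ d →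
      ∀ h : (Fin d → Fin d → ℝ) → EuclideanSpace ℝ (Fin d) → EuclideanSpace ℝ (Fin d),
        IsCPHash h →
          ∀ p q : EuclideanSpace ℝ (Fin d), ‖p‖ = 1 → ‖q‖ = 1 → dist p q = τ →
            |Real.log (1 / (gaussMatrix d {A | h A p = h A q}).toReal)
                - τ ^ 2 / (4 - τ ^ 2) * Real.log d|
              ≤ C * Real.log (Real.log d) := by
  have hpos : 0 < 4 - τ ^ 2 := by nlinarith
  have hrate : 1 - 4 / (4 - τ ^ 2) = -(τ ^ 2 / (4 - τ ^ 2)) := by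
    field_simp
    ring
  obtain ⟨K, hK, hlower⟩ := exists_pos_mul_le_collisionProb hpos hτ0
  have hloglog : ∀ᶠ d : ℕ in Filter.atTop, 1 ≤ log (log d) :=
    (tendsto_log_atTop.comp (tendsto_log_atTop.comp
      tendsto_natCast_atTop_atTop)).eventually_ge_atTop 1
  obtain ⟨d₀, hd₀⟩ := Filter.eventually_atTop.1 ((eventually_collisionProb_le (4 - τ ^ 2)).and
    (hloglog.and (Filter.eventually_ge_atTop 2)))
  refine ⟨|log K| + |log 4| + |1| + |12 / (4 - τ ^ 2)|, by positivity, d₀,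
    fun d hd h hh p q hp hq hpq ↦ ?_⟩
  obtain ⟨hupper, hloglog_d, hd₂⟩ := hd₀ d hd
  have hadd : ‖p + q‖ ^ 2 = 4 - τ ^ 2 := hpq ▸ norm_add_sq_eq_four_sub_dist_sq hp hq
  have hlower_pq := hlower d hd₂ h hh p q hp hq hadd hpq
  have hupper_pq := hupper h hh p q hp hq hadd
  have hd_pos : 1 < (d : ℝ) := by exact_mod_cast hd₂
  rw [hrate] at hlower_pq hupper_pq
  rw [← rpow_neg_one] at hlower_pq
  exact abs_log_one_div_sub_le hK four_pos (one_pos.trans hd_pos) (log_pos hd_pos) hloglog_d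
    hlower_pq hupper_pq
end
end

section
/- Let 0 < τ < 2, α = 1 − τ²/2, β = √(τ² − τ⁴/4), and let p, q ∈ S^{d−1} with ‖p − q‖ = τ. Let A be a d×d random matrix with i.i.d. standard Gaussian entries and h_A the cross-polytope hash. Then Pr_A[h_A(p) = h_A(q)] = 2d · E_{X₁,Y₁}[ (Pr_{X₂,Y₂}[ |X₂| ≤ X₁ and |αX₂ + βY₂| ≤ αX₁ + βY₁ ])^{d−1} ], where X₁, Y₁, X₂, Y₂ are independent standard Gaussian random variables (the inner probability is over X₂, Y₂ with X₁, Y₁ fixed). -/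
open MeasureTheory ProbabilityTheory Real

noncomputable section

/-- The distribution of a pair of independent standard Gaussians. -/
def gauss2 : Measure (ℝ × ℝ) := stdGaussian.prod stdGaussian

/-!
The hash of `p` is the vertex `ε e_i` for which the signed coordinate `ε (Ap)_i` is largest, so `p`
and `q` collide when a single `(i, ε)` maximizes the signed coordinates of both `Ap` and `Aq`.
Almost surely the maximizers are unique, so these `2d` events are disjoint, and they all have the
same probability by exchangeability and symmetry. The pairs `((Ap)_i, (Aq)_i)` are i.i.d. with the
law of `(X, αX + βY)`, because the joint law of two linear functionals of a standard Gaussian vector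
depends only on their Gram matrix. Given the pair of index `i`, the other `d - 1` pairs are
dominated by it independently of each other, which produces the power.
-/

section SignedCoord

variable {ι E F : Type*} [AddCommGroup E] [AddCommGroup F]

/-- The signed coordinate `ε • u i` of `u` at `k = (i, ε)`. The index type `ι × ℤˣ` enumerates the
vertices `±e_i` of the cross-polytope. -/
def signedCoord (u : ι → E) (k : ι × ℤˣ) : E :=
  k.2 • u k.1

/-- `k` is the index of a largest signed coordinate of `u`, stated as domination of all the `|u j|`.
The order on `E` may be partial: for `E = ℝ × ℝ`, where order and absolute value are componentwise,
both components of `u` have a largest signed coordinate at `k`. -/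
def IsSignedMax [Lattice E] (u : ι → E) (k : ι × ℤˣ) : Prop :=
  ∀ j, |u j| ≤ signedCoord u k

variable {u : ι → E} {k l : ι × ℤˣ}

@[simp]
lemma signedCoord_one (u : ι → E) (i : ι) : signedCoord u (i, 1) = u i :=
  one_smul _ _

@[simp]
lemma signedCoord_neg_right (u : ι → E) (i : ι) (ε : ℤˣ) :
    signedCoord u (i, -ε) = -signedCoord u (i, ε) :=
  Units.neg_smul _ _

@[simp]
lemma signedCoord_neg_left (u : ι → E) (k : ι × ℤˣ) :
    signedCoord (-u) k = -signedCoord u k :=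
  smul_neg _ _

variable [Lattice E] [Lattice F]

lemma isSignedMax_iff_forall_signedCoord_le :
    IsSignedMax u k ↔ ∀ l, signedCoord u l ≤ signedCoord u k := by
  constructor
  · rintro h ⟨j, ε⟩
    obtain rfl | rfl := Int.units_eq_one_or ε
    · simpa using (le_abs_self (u j)).trans (h j)
    · simpa using (neg_le_abs (u j)).trans (h j)
  · exact fun h j ↦ abs_le'.2 ⟨by simpa using h (j, 1), by simpa using h (j, -1)⟩

lemma IsSignedMax.eq_of_injective (hk : IsSignedMax u k) (hl : IsSignedMax u l)
    (hu : Function.Injective (signedCoord u)) : k = l :=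
  hu <| le_antisymm (isSignedMax_iff_forall_signedCoord_le.1 hl k)
    (isSignedMax_iff_forall_signedCoord_le.1 hk l)

lemma isSignedMax_neg_left_iff {i : ι} {ε : ℤˣ} :
    IsSignedMax (-u) (i, ε) ↔ IsSignedMax u (i, -ε) := by
  simp [IsSignedMax]

lemma isSignedMax_prodMk_iff {v : ι → F} :
    IsSignedMax (fun i ↦ (u i, v i)) k ↔ IsSignedMax u k ∧ IsSignedMax v k :=
  forall_and

end SignedCoord

section ProductMeasure

variable {Ω E : Type*} [MeasurableSpace Ω] [MeasurableSpace E]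

lemma ae_ne_of_indepFun [MeasurableEq E] {μ : Measure Ω} [IsFiniteMeasure μ] {X Y : Ω → E}
    (hXY : IndepFun X Y μ) (hX : AEMeasurable X μ) (hY : AEMeasurable Y μ)
    [NullSingletonClass (μ.map Y)] : ∀ᵐ ω ∂μ, X ω ≠ Y ω := by
  have hdiag : ∀ᵐ z ∂((μ.map X).prod (μ.map Y)), z.1 ≠ z.2 := by
    refine (Measure.ae_prod_iff_ae_ae
      (measurableSet_eq_fun measurable_fst measurable_snd).compl).2 (.of_forall fun x ↦ ?_)
    simp [ae_iff]
  rw [← hXY.map_prod_eq_prod_map_map hX hY] at hdiag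
  exact ae_of_ae_map (hX.prodMk hY) hdiag

theorem pi_forall_mem_eq_lintegral_pow (ν : Measure E) [SigmaFinite ν] {R : E → Set E}
    (hR : MeasurableSet {x : E × E | x.2 ∈ R x.1}) (hself : ∀ w, (R w).Nonempty → w ∈ R w)
    {n : ℕ} (i : Fin (n + 2)) :
    Measure.pi (fun _ : Fin (n + 2) ↦ ν) {w | ∀ j, w j ∈ R (w i)} =
      ∫⁻ w, ν (R w) ^ (n + 1) ∂ν := by
  let S : Set (E × (Fin (n + 1) → E)) := {x | ∀ j, x.2 j ∈ R x.1}
  have hS : MeasurableSet S := by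
    simp only [S, Set.ofPred_forall]
    exact .iInter fun j ↦
      hR.preimage (f := fun x : E × (Fin (n + 1) → E) ↦ (x.1, x.2 j)) (by fun_prop)
  have hpre : {w : Fin (n + 2) → E | ∀ j, w j ∈ R (w i)} =
      MeasurableEquiv.piFinSuccAbove (fun _ ↦ E) i ⁻¹' S := by
    ext w
    change (∀ j, w j ∈ R (w i)) ↔ ∀ j, w (i.succAbove j) ∈ R (w i)
    rw [Fin.forall_iff_succAbove i]
    exact and_iff_right_of_imp fun h ↦ hself _ ⟨_, h 0⟩
  have hsection (w : E) : Prod.mk w ⁻¹' S = Set.univ.pi fun _ ↦ R w := by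
    ext z; simp [S]
  rw [hpre, (measurePreserving_piFinSuccAbove (fun _ ↦ ν) i).measure_preimage
    hS.nullMeasurableSet, Measure.prod_apply hS]
  simp [hsection, Measure.pi_pi]

end ProductMeasure

section IIDSignedMax

variable {ι E : Type*} [AddCommGroup E] [MeasurableSpace E] [MeasurableNeg E]

lemma measurable_units_smul (ε : ℤˣ) : Measurable fun x : E ↦ ε • x := by
  obtain rfl | rfl := Int.units_eq_one_or ε
  · simpa using measurable_id'
  · simpa [Units.neg_smul] using measurable_neg

lemma measurable_signedCoord (k : ι × ℤˣ) : Measurable fun u : ι → E ↦ signedCoord u k :=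
  (measurable_units_smul k.2).comp (measurable_pi_apply k.1)

lemma ae_injective_signedCoord [Fintype ι] [IsAddTorsionFree E] [MeasurableEq E] (ν : Measure E)
    [IsProbabilityMeasure ν] [NullSingletonClass ν] :
    ∀ᵐ u ∂Measure.pi fun _ : ι ↦ ν, Function.Injective (signedCoord u) := by
  have hne_zero : ∀ᵐ u ∂Measure.pi fun _ : ι ↦ ν, ∀ i, u i ≠ 0 :=
    ae_all_iff.2 fun i ↦ Measure.ae_eval_ne (fun _ ↦ ν) i 0
  have hne_smul : ∀ᵐ u ∂Measure.pi fun _ : ι ↦ ν, ∀ i j, i ≠ j → ∀ ε : ℤˣ, ε • u i ≠ u j := by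
    simp only [ae_all_iff]
    intro i j hij ε
    have hlaw : (Measure.pi fun _ : ι ↦ ν).map (fun u ↦ u j) = ν :=
      (measurePreserving_eval (fun _ : ι ↦ ν) j).map_eq
    have : NullSingletonClass ((Measure.pi fun _ : ι ↦ ν).map fun u ↦ u j) := by rwa [hlaw]
    have hind : IndepFun (fun u : ι → E ↦ u i) (fun u ↦ u j) (Measure.pi fun _ ↦ ν) :=
      (iIndepFun_pi (X := fun _ ↦ id) fun _ ↦ aemeasurable_id).indepFun hij
    exact ae_ne_of_indepFun (hind.comp (measurable_units_smul ε) measurable_id)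
      ((measurable_units_smul ε).comp (measurable_pi_apply i)).aemeasurable
      (measurable_pi_apply j).aemeasurable
  filter_upwards [hne_zero, hne_smul] with u hzero hsmul
  rintro ⟨i, ε⟩ ⟨j, δ⟩ (h : ε • u i = δ • u j)
  obtain rfl : i = j := by
    by_contra hij
    exact hsmul i j hij (δ⁻¹ * ε) (by rw [mul_smul, h, inv_smul_smul])
  obtain rfl : ε = δ := by
    by_contra hεδ
    rw [Int.units_ne_iff_eq_neg.1 hεδ, Units.neg_smul, neg_eq_self, smul_eq_zero_iff_eq] at h
    exact hzero i h
  rfl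

variable [Lattice E] [TopologicalSpace E] [SecondCountableTopology E]
  [OpensMeasurableSpace E] [OrderClosedTopology E]

lemma measurableSet_abs_le {Ω : Type*} [MeasurableSpace Ω] {f g : Ω → E}
    (hf : Measurable f) (hg : Measurable g) : MeasurableSet {ω | |f ω| ≤ g ω} := by
  simp only [abs_le', Set.ofPred_and]
  exact (measurableSet_le hf hg).inter (measurableSet_le hf.neg hg)

lemma measurableSet_isSignedMax [Countable ι] (k : ι × ℤˣ) :
    MeasurableSet {u : ι → E | IsSignedMax u k} := by
  simp only [IsSignedMax, Set.ofPred_forall]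
  exact .iInter fun j ↦ measurableSet_abs_le (measurable_pi_apply j) (measurable_signedCoord k)

variable [IsOrderedAddMonoid E] (ν : Measure E) {n : ℕ}

theorem pi_isSignedMax [SigmaFinite ν] [ν.IsNegInvariant] (k : Fin (n + 2) × ℤˣ) :
    Measure.pi (fun _ : Fin (n + 2) ↦ ν) {u | IsSignedMax u k} =
      ∫⁻ w, ν {z | |z| ≤ w} ^ (n + 1) ∂ν := by
  have hpos (i : Fin (n + 2)) :
      Measure.pi (fun _ : Fin (n + 2) ↦ ν) {u | IsSignedMax u (i, 1)} =
        ∫⁻ w, ν {z | |z| ≤ w} ^ (n + 1) ∂ν := by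
    simp only [IsSignedMax, signedCoord_one]
    refine pi_forall_mem_eq_lintegral_pow ν (R := fun w ↦ {z | |z| ≤ w})
      (measurableSet_abs_le measurable_snd measurable_fst) ?_ i
    rintro w ⟨z, hz⟩
    exact (abs_of_nonneg ((abs_nonneg z).trans hz)).le
  obtain ⟨i, ε⟩ := k
  obtain rfl | rfl := Int.units_eq_one_or ε
  · exact hpos i
  · have hneg := Measure.measurePreserving_neg (Measure.pi fun _ : Fin (n + 2) ↦ ν)
    rw [← hpos i, ← hneg.measure_preimage (measurableSet_isSignedMax _).nullMeasurableSet]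
    simp only [Set.preimage_ofPred_eq, isSignedMax_neg_left_iff, neg_neg]

theorem pi_exists_isSignedMax [IsProbabilityMeasure ν] [ν.IsNegInvariant] [NullSingletonClass ν]
    [IsAddTorsionFree E] [MeasurableEq E] :
    Measure.pi (fun _ : Fin (n + 2) ↦ ν) {u | ∃ k, IsSignedMax u k} =
      2 * (n + 2 : ℕ) * ∫⁻ w, ν {z | |z| ≤ w} ^ (n + 1) ∂ν := by
  have hdisj : Pairwise (Function.onFun (AEDisjoint (Measure.pi fun _ : Fin (n + 2) ↦ ν))
      fun k ↦ {u : Fin (n + 2) → E | IsSignedMax u k}) := by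
    intro k l hkl
    refine measure_eq_zero_iff_ae_notMem.2 ?_
    filter_upwards [ae_injective_signedCoord ν] with u hu ⟨hk, hl⟩
    exact hkl (hk.eq_of_injective hl hu)
  rw [Set.ofPred_exists, measure_iUnion₀ hdisj
    fun k ↦ (measurableSet_isSignedMax k).nullMeasurableSet]
  simp [pi_isSignedMax, mul_comm]

end IIDSignedMax

section InnerProduct

open scoped RealInnerProductSpace

variable {V : Type*} [NormedAddCommGroup V] [InnerProductSpace ℝ V]

lemma real_inner_eq_one_sub_dist_sq_div_two {p q : V} (hp : ‖p‖ = 1) (hq : ‖q‖ = 1) :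
    ⟪p, q⟫ = 1 - dist p q ^ 2 / 2 := by
  rw [dist_eq_norm, norm_sub_sq_real, hp, hq]
  ring

lemma two_le_finrank_of_abs_real_inner_lt [FiniteDimensional ℝ V] {p q : V}
    (h : |⟪p, q⟫| < ‖p‖ * ‖q‖) : 2 ≤ Module.finrank ℝ V := by
  by_contra! hlt
  obtain ⟨v, hv⟩ := finrank_le_one_iff.1 (Nat.le_of_lt_succ hlt)
  obtain ⟨a, rfl⟩ := hv p
  obtain ⟨b, rfl⟩ := hv q
  refine h.ne ?_
  simp only [real_inner_smul_left, real_inner_smul_right, real_inner_self_eq_norm_sq, abs_mul,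
    abs_pow, abs_norm, norm_smul, Real.norm_eq_abs]
  ring

lemma inner_le_inner_of_dist_normalized_le {x v w : V} (hvw : ‖v‖ = ‖w‖)
    (h : dist (‖x‖⁻¹ • x) v ≤ dist (‖x‖⁻¹ • x) w) : ⟪x, w⟫ ≤ ⟪x, v⟫ := by
  obtain rfl | hx := eq_or_ne x 0
  · simp
  have hsq := pow_le_pow_left₀ dist_nonneg h 2
  simp only [dist_eq_norm, norm_sub_sq_real, hvw, real_inner_smul_left] at hsq
  have hpos : 0 < ‖x‖⁻¹ := by positivity
  exact le_of_mul_le_mul_left (by linarith) hpos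

lemma comp_prod_innerSL (L : StrongDual ℝ (ℝ × ℝ)) (p q : V) :
    L ∘L (innerSL ℝ p).prod (innerSL ℝ q) = innerSL ℝ (L (1, 0) • p + L (0, 1) • q) := by
  have hL (a b : ℝ) : L (a, b) = a * L (1, 0) + b * L (0, 1) := by
    rw [← smul_eq_mul, ← smul_eq_mul, ← map_smul, ← map_smul, ← map_add]
    simp
  ext x
  refine (hL _ _).trans ?_
  simp [mul_comm]

end InnerProduct

section Hash

open scoped RealInnerProductSpace

variable {d : ℕ}

/-- The vertex `ε e_i` of the cross-polytope, for `k = (i, ε)`. -/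
def signedVertex (k : Fin d × ℤˣ) : EuclideanSpace ℝ (Fin d) :=
  signedCoord (fun i ↦ EuclideanSpace.single i 1) k

lemma mem_crossPolytope_iff {y : EuclideanSpace ℝ (Fin d)} :
    y ∈ crossPolytope d ↔ ∃ k, y = signedVertex k := by
  have hneg (i : Fin d) : signedVertex (i, -1) = EuclideanSpace.single i (-1) := by
    simp [signedVertex, ← PiLp.single_neg]
  constructor
  · rintro ⟨i, rfl | rfl⟩
    exacts [⟨(i, 1), by simp [signedVertex]⟩, ⟨(i, -1), (hneg i).symm⟩]
  · rintro ⟨⟨i, ε⟩, rfl⟩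
    obtain rfl | rfl := Int.units_eq_one_or ε
    exacts [⟨i, .inl (by simp [signedVertex])⟩, ⟨i, .inr (hneg i)⟩]

lemma inner_signedVertex (x : EuclideanSpace ℝ (Fin d)) (k : Fin d × ℤˣ) :
    ⟪x, signedVertex k⟫ = signedCoord x k := by
  obtain ⟨i, ε⟩ := k
  obtain rfl | rfl := Int.units_eq_one_or ε <;>
    simp [signedVertex, EuclideanSpace.inner_single_right]

lemma norm_signedVertex (k : Fin d × ℤˣ) : ‖signedVertex k‖ = 1 := by
  obtain ⟨i, ε⟩ := k
  obtain rfl | rfl := Int.units_eq_one_or ε <;> simp [signedVertex]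

namespace IsCPHash

variable {h : (Fin d → Fin d → ℝ) → EuclideanSpace ℝ (Fin d) → EuclideanSpace ℝ (Fin d)}
  {A : Fin d → Fin d → ℝ} {x y : EuclideanSpace ℝ (Fin d)} {k : Fin d × ℤˣ}

lemma exists_eq_signedVertex (hh : IsCPHash h) (A : Fin d → Fin d → ℝ)
    (x : EuclideanSpace ℝ (Fin d)) : ∃ k, h A x = signedVertex k :=
  mem_crossPolytope_iff.1 (hh A x).1

lemma isSignedMax_of_eq (hh : IsCPHash h) (hk : h A x = signedVertex k) :
    IsSignedMax (matVec A x) k := by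
  refine isSignedMax_iff_forall_signedCoord_le.2 fun l ↦ ?_
  have hdist := (hh A x).2 (signedVertex l) (mem_crossPolytope_iff.2 ⟨l, rfl⟩)
  rw [hk] at hdist
  simpa only [inner_signedVertex] using
    inner_le_inner_of_dist_normalized_le (by simp only [norm_signedVertex]) hdist

lemma eq_signedVertex_iff (hh : IsCPHash h)
    (hx : Function.Injective (signedCoord (matVec A x))) :
    h A x = signedVertex k ↔ IsSignedMax (matVec A x) k := by
  refine ⟨hh.isSignedMax_of_eq, fun hk ↦ ?_⟩
  obtain ⟨l, hl⟩ := hh.exists_eq_signedVertex A x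
  rwa [hk.eq_of_injective (hh.isSignedMax_of_eq hl) hx]

lemma eq_iff_exists_isSignedMax (hh : IsCPHash h)
    (hx : Function.Injective (signedCoord (matVec A x)))
    (hy : Function.Injective (signedCoord (matVec A y))) :
    h A x = h A y ↔ ∃ k, IsSignedMax (fun i ↦ (matVec A x i, matVec A y i)) k := by
  simp only [isSignedMax_prodMk_iff, ← hh.eq_signedVertex_iff hx, ← hh.eq_signedVertex_iff hy]
  constructor
  · intro hxy
    obtain ⟨k, hk⟩ := hh.exists_eq_signedVertex A x
    exact ⟨k, hk, hxy ▸ hk⟩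
  · rintro ⟨k, hxk, hyk⟩
    rw [hxk, hyk]

end IsCPHash

end Hash

section Gaussian

open scoped RealInnerProductSpace

variable {V W : Type*} [NormedAddCommGroup V] [InnerProductSpace ℝ V] [FiniteDimensional ℝ V]
  [MeasurableSpace V] [BorelSpace V] [NormedAddCommGroup W] [InnerProductSpace ℝ W]
  [FiniteDimensional ℝ W] [MeasurableSpace W] [BorelSpace W]

lemma map_inner_pair_stdGaussian_eq {p q : V} {p' q' : W} (hp : ‖p‖ = ‖p'‖) (hq : ‖q‖ = ‖q'‖)
    (hpq : ⟪p, q⟫ = ⟪p', q'⟫) :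
    (ProbabilityTheory.stdGaussian V).map (fun x ↦ (⟪p, x⟫, ⟪q, x⟫)) =
      (ProbabilityTheory.stdGaussian W).map (fun x ↦ (⟪p', x⟫, ⟪q', x⟫)) := by
  have hnorm (a b : ℝ) : ‖a • p + b • q‖ = ‖a • p' + b • q'‖ := by
    rw [← sq_eq_sq₀ (norm_nonneg _) (norm_nonneg _)]
    simp only [norm_add_sq_real, norm_smul, hp, hq, real_inner_smul_left, real_inner_smul_right,
      hpq]
  change Measure.map ((innerSL ℝ p).prod (innerSL ℝ q)) _ =
    Measure.map ((innerSL ℝ p').prod (innerSL ℝ q')) _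
  refine Measure.ext_of_charFunDual (funext fun L ↦ ?_)
  rw [charFunDual_map, charFunDual_map, charFunDual_stdGaussian, charFunDual_stdGaussian,
    comp_prod_innerSL, comp_prod_innerSL, innerSL_apply_norm, innerSL_apply_norm, hnorm]

lemma pi_stdGaussian_map_toLp {ι : Type*} [Fintype ι] :
    (Measure.pi fun _ : ι ↦ _root_.stdGaussian).map (WithLp.toLp 2) =
      ProbabilityTheory.stdGaussian (EuclideanSpace ℝ ι) :=
  map_pi_eq_stdGaussian

lemma map_sum_mul_pair_eq {ι κ : Type*} [Fintype ι] [Fintype κ] {p q : EuclideanSpace ℝ ι}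
    {p' q' : EuclideanSpace ℝ κ} (hp : ‖p‖ = ‖p'‖) (hq : ‖q‖ = ‖q'‖) (hpq : ⟪p, q⟫ = ⟪p', q'⟫) :
    (Measure.pi fun _ : ι ↦ _root_.stdGaussian).map
        (fun a ↦ (∑ j, a j * p j, ∑ j, a j * q j)) =
      (Measure.pi fun _ : κ ↦ _root_.stdGaussian).map
        (fun a ↦ (∑ j, a j * p' j, ∑ j, a j * q' j)) := by
  have h := map_inner_pair_stdGaussian_eq hp hq hpq
  rw [← pi_stdGaussian_map_toLp, ← pi_stdGaussian_map_toLp, Measure.map_map (by fun_prop)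
    (by fun_prop), Measure.map_map (by fun_prop) (by fun_prop)] at h
  simpa only [Function.comp_def, PiLp.inner_apply, RCLike.inner_apply, conj_trivial] using h

instance isProbabilityMeasure_stdGaussian : IsProbabilityMeasure _root_.stdGaussian :=
  inferInstanceAs (IsProbabilityMeasure (gaussianReal 0 1))

instance nullSingletonClass_stdGaussian : NullSingletonClass _root_.stdGaussian :=
  nullSingletonClass_gaussianReal one_ne_zero

instance isNegInvariant_stdGaussian : Measure.IsNegInvariant _root_.stdGaussian :=
  ⟨gaussianReal_map_neg.trans (by rw [neg_zero]; rfl)⟩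

instance isProbabilityMeasure_gauss2 : IsProbabilityMeasure gauss2 :=
  inferInstanceAs (IsProbabilityMeasure (_root_.stdGaussian.prod _root_.stdGaussian))

lemma measurePreserving_neg_gauss2 : MeasurePreserving (fun z : ℝ × ℝ ↦ -z) gauss2 gauss2 :=
  (Measure.measurePreserving_neg _root_.stdGaussian).prod
    (Measure.measurePreserving_neg _root_.stdGaussian)

/-- The law of the pair `(X, αX + βY)` for independent standard Gaussians `X` and `Y`. -/
def correlatedGauss (α β : ℝ) : Measure (ℝ × ℝ) :=
  gauss2.map fun z ↦ (z.1, α * z.1 + β * z.2)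

variable (α β : ℝ)

lemma measurePreserving_correlatedGauss :
    MeasurePreserving (fun z : ℝ × ℝ ↦ (z.1, α * z.1 + β * z.2)) gauss2 (correlatedGauss α β) :=
  ⟨by fun_prop, rfl⟩

instance isProbabilityMeasure_correlatedGauss : IsProbabilityMeasure (correlatedGauss α β) :=
  Measure.isProbabilityMeasure_map (by fun_prop)

instance isNegInvariant_correlatedGauss : (correlatedGauss α β).IsNegInvariant where
  neg_eq_self := by
    have h := measurePreserving_correlatedGauss α β
    have hodd : (fun z : ℝ × ℝ ↦ -z) ∘ (fun z : ℝ × ℝ ↦ (z.1, α * z.1 + β * z.2)) =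
        (fun z : ℝ × ℝ ↦ (z.1, α * z.1 + β * z.2)) ∘ fun z ↦ -z := by
      ext z <;> simp [add_comm]
    rw [Measure.neg, ← h.map_eq, Measure.map_map measurable_neg h.measurable]
    exact (congrArg gauss2.map hodd).trans (h.comp measurePreserving_neg_gauss2).map_eq

lemma measurePreserving_fst_correlatedGauss :
    MeasurePreserving Prod.fst (correlatedGauss α β) _root_.stdGaussian :=
  ⟨measurable_fst, by
    rw [correlatedGauss, Measure.map_map measurable_fst (by fun_prop)]
    exact measurePreserving_fst.map_eq⟩

instance nullSingletonClass_correlatedGauss : NullSingletonClass (correlatedGauss α β) where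
  measure_singleton z := by
    have h := (measurePreserving_fst_correlatedGauss α β).quasiMeasurePreserving.preimage_null
      (measure_singleton z.1)
    exact measure_mono_null (by simp) h

variable {α β} {ι : Type*} [Fintype ι]

lemma measurePreserving_sum_mul_pair {p q : EuclideanSpace ℝ ι} (hp : ‖p‖ = 1) (hq : ‖q‖ = 1)
    (hpq : ⟪p, q⟫ = α) (hαβ : α ^ 2 + β ^ 2 = 1) :
    MeasurePreserving (fun a : ι → ℝ ↦ (∑ j, a j * p j, ∑ j, a j * q j))
      (Measure.pi fun _ ↦ _root_.stdGaussian) (correlatedGauss α β) := by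
  refine ⟨by fun_prop, ?_⟩
  rw [map_sum_mul_pair_eq (p' := !₂[1, 0]) (q' := !₂[α, β])]
  · rw [correlatedGauss, gauss2, ← (measurePreserving_finTwoArrow _).map_eq,
      Measure.map_map (by fun_prop) (by fun_prop)]
    congr 1 with a <;> simp [Fin.sum_univ_two, mul_comm]
  · simp [hp, EuclideanSpace.norm_eq]
  · simp [hq, EuclideanSpace.norm_eq, hαβ]
  · simp [hpq, PiLp.inner_apply]

lemma measurePreserving_sum_mul {p : EuclideanSpace ℝ ι} (hp : ‖p‖ = 1) :
    MeasurePreserving (fun a : ι → ℝ ↦ ∑ j, a j * p j)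
      (Measure.pi fun _ ↦ _root_.stdGaussian) _root_.stdGaussian :=
  (measurePreserving_fst_correlatedGauss 1 0).comp
    (measurePreserving_sum_mul_pair hp hp (by simp [hp]) (by norm_num))

end Gaussian

section Collision

open scoped RealInnerProductSpace

variable {α β : ℝ} {d : ℕ}

lemma measurePreserving_matVec_pair {p q : EuclideanSpace ℝ (Fin d)} (hp : ‖p‖ = 1) (hq : ‖q‖ = 1)
    (hpq : ⟪p, q⟫ = α) (hαβ : α ^ 2 + β ^ 2 = 1) :
    MeasurePreserving (fun (A : Fin d → Fin d → ℝ) i ↦ (matVec A p i, matVec A q i))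
      (gaussMatrix d) (Measure.pi fun _ ↦ correlatedGauss α β) :=
  measurePreserving_pi _ _ fun _ ↦ measurePreserving_sum_mul_pair hp hq hpq hαβ

lemma ae_injective_signedCoord_matVec {p : EuclideanSpace ℝ (Fin d)} (hp : ‖p‖ = 1) :
    ∀ᵐ A ∂gaussMatrix d, Function.Injective (signedCoord (matVec A p)) :=
  (measurePreserving_pi _ _ fun _ ↦ measurePreserving_sum_mul hp).quasiMeasurePreserving.ae
    (ae_injective_signedCoord _root_.stdGaussian)

lemma integral_gauss2_eq_toReal_lintegral_correlatedGauss (α β : ℝ) (n : ℕ) :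
    ∫ w, (gauss2 {z | |z.1| ≤ w.1 ∧ |α * z.1 + β * z.2| ≤ α * w.1 + β * w.2}).toReal ^ n ∂gauss2 =
      (∫⁻ w, correlatedGauss α β {z | |z| ≤ w} ^ n ∂correlatedGauss α β).toReal := by
  let T : ℝ × ℝ → ℝ × ℝ := fun z ↦ (z.1, α * z.1 + β * z.2)
  have hT : MeasurePreserving T gauss2 (correlatedGauss α β) :=
    measurePreserving_correlatedGauss α β
  have hmeas : Measurable fun w : ℝ × ℝ ↦ correlatedGauss α β {z | |z| ≤ w} ^ n :=
    (measurable_measure_prodMk_left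
      (measurableSet_abs_le measurable_snd measurable_fst)).pow_const n
  have hpre (w : ℝ × ℝ) :
      gauss2 {z | |z.1| ≤ w.1 ∧ |α * z.1 + β * z.2| ≤ α * w.1 + β * w.2} =
        correlatedGauss α β {z | |z| ≤ T w} :=
    hT.measure_preimage
      (measurableSet_abs_le measurable_id (measurable_const (a := T w))).nullMeasurableSet
  simp_rw [hpre, ← ENNReal.toReal_pow]
  rw [← hT.lintegral_comp hmeas]
  exact integral_toReal (hmeas.comp hT.measurable).aemeasurable
    (.of_forall fun w ↦ ENNReal.pow_lt_top (measure_lt_top _ _))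

theorem gaussMatrix_setOf_hash_eq {n : ℕ}
    {h : (Fin (n + 2) → Fin (n + 2) → ℝ) → EuclideanSpace ℝ (Fin (n + 2)) →
      EuclideanSpace ℝ (Fin (n + 2))} (hh : IsCPHash h)
    {p q : EuclideanSpace ℝ (Fin (n + 2))} (hp : ‖p‖ = 1) (hq : ‖q‖ = 1)
    (hpq : ⟪p, q⟫ = α) (hαβ : α ^ 2 + β ^ 2 = 1) :
    gaussMatrix (n + 2) {A | h A p = h A q} =
      2 * (n + 2 : ℕ) *
        ∫⁻ w, correlatedGauss α β {z | |z| ≤ w} ^ (n + 1) ∂correlatedGauss α β := by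
  have hae : {A | h A p = h A q} =ᵐ[gaussMatrix (n + 2)]
      (fun A i ↦ (matVec A p i, matVec A q i)) ⁻¹' {u | ∃ k, IsSignedMax u k} := by
    rw [Filter.eventuallyEq_set]
    filter_upwards [ae_injective_signedCoord_matVec hp, ae_injective_signedCoord_matVec hq]
      with A hAp hAq using hh.eq_iff_exists_isSignedMax hAp hAq
  have hmeas : MeasurableSet {u : Fin (n + 2) → ℝ × ℝ | ∃ k, IsSignedMax u k} := by
    rw [Set.ofPred_exists]
    exact .iUnion measurableSet_isSignedMax
  rw [measure_congr hae, (measurePreserving_matVec_pair hp hq hpq hαβ).measure_preimage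
    hmeas.nullMeasurableSet, pi_exists_isSignedMax]

end Collision

/-- For unit vectors `p, q` at distance `τ`, the collision probability of the cross-polytope
hash equals `2d · E_{X₁,Y₁}[ Pr_{X₂,Y₂}[|X₂| ≤ X₁ ∧ |αX₂ + βY₂| ≤ αX₁ + βY₁]^{d-1} ]`. -/
theorem cross_polytope_collision_probability_formula
    (τ : ℝ) (hτ0 : 0 < τ) (hτ2 : τ < 2) (α β : ℝ)
    (hα : α = 1 - τ ^ 2 / 2) (hβ : β = Real.sqrt (τ ^ 2 - τ ^ 4 / 4))
    (d : ℕ)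
    (h : (Fin d → Fin d → ℝ) → EuclideanSpace ℝ (Fin d) → EuclideanSpace ℝ (Fin d))
    (hh : IsCPHash h)
    (p q : EuclideanSpace ℝ (Fin d)) (hp : ‖p‖ = 1) (hq : ‖q‖ = 1) (hpq : dist p q = τ) :
    (gaussMatrix d {A | h A p = h A q}).toReal
      = 2 * d * ∫ w : ℝ × ℝ,
          ((gauss2 {z : ℝ × ℝ | |z.1| ≤ w.1 ∧ |α * z.1 + β * z.2| ≤ α * w.1 + β * w.2}).toReal)
            ^ (d - 1) ∂gauss2 := by
  have hα_lt : |α| < 1 := by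
    rw [hα, abs_lt]
    constructor <;> nlinarith
  have hαβ : α ^ 2 + β ^ 2 = 1 := by
    have hsub : τ ^ 2 - τ ^ 4 / 4 = 1 - α ^ 2 := by rw [hα]; ring
    rw [hβ, hsub, Real.sq_sqrt (sub_nonneg.2 ((sq_le_one_iff_abs_le_one α).2 hα_lt.le)),
      add_sub_cancel]
  have hinner : inner ℝ p q = α := by
    rw [real_inner_eq_one_sub_dist_sq_div_two hp hq, hpq, hα]
  have hd : 2 ≤ d := by
    have hlt : |inner ℝ p q| < ‖p‖ * ‖q‖ := by rwa [hinner, hp, hq, mul_one]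
    simpa using two_le_finrank_of_abs_real_inner_lt hlt
  obtain ⟨n, rfl⟩ := Nat.exists_eq_add_of_le' hd
  rw [gaussMatrix_setOf_hash_eq hh hp hq hinner hαβ, Nat.add_succ_sub_one,
    integral_gauss2_eq_toReal_lintegral_correlatedGauss]
  simp only [ENNReal.toReal_mul, ENNReal.toReal_ofNat, ENNReal.toReal_natCast]
end
end
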